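/- arXiv:2501.04408 — 4 statements merged into one kernel-verified Lean document; each statement's English description precedes it below -/
import Mathlib

section
/- The uplink rate function r(p,B) = B · log₂(1 + p·g/(N₀·B)) is jointly concave with respect to (p,B) on the open positive quadrant {(p,B) ∈ ℝ × ℝ : p > 0 and B > 0}. (Lemma 1, first bullet.) -/
/-- The perspective `(x, t) ↦ t * f (x / t)` of a concave function is jointly concave. -/
theorem ConcaveOn.perspective {s : Set ℝ} {f : ℝ → ℝ} (hf : ConcaveOn ℝ s f) :
    ConcaveOn ℝ {x : ℝ × ℝ | 0 < x.2 ∧ x.1 / x.2 ∈ s} (fun x => x.2 * f (x.1 / x.2)) := by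
  have pos {t u a b : ℝ} (ht : 0 < t) (hu : 0 < u) (ha : 0 ≤ a) (hb : 0 ≤ b)
      (hab : a + b = 1) : 0 < a * t + b * u :=
    convex_Ioi (𝕜 := ℝ) (0 : ℝ) ht hu ha hb hab
  have weights {t u a b : ℝ} (hT : 0 < a * t + b * u) :
      a * t / (a * t + b * u) + b * u / (a * t + b * u) = 1 := by
    rw [← add_div, div_self hT.ne']
  have combo {x t y u a b : ℝ} (ht : 0 < t) (hu : 0 < u) :
      (a * x + b * y) / (a * t + b * u) =
        a * t / (a * t + b * u) * (x / t) + b * u / (a * t + b * u) * (y / u) := by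
    field_simp
  refine ⟨?_, ?_⟩
  · rintro ⟨x, t⟩ ⟨ht, hx⟩ ⟨y, u⟩ ⟨hu, hy⟩ a b ha hb hab
    dsimp only at ht hx hu hy
    have hT := pos ht hu ha hb hab
    refine ⟨hT, ?_⟩
    simp only [Prod.smul_mk, Prod.mk_add_mk, smul_eq_mul]
    rw [combo ht hu]
    exact hf.1 hx hy (by positivity) (by positivity) (weights hT)
  · rintro ⟨x, t⟩ ⟨ht, hx⟩ ⟨y, u⟩ ⟨hu, hy⟩ a b ha hb hab
    dsimp only at ht hx hu hy
    have hT := pos ht hu ha hb hab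
    have h := hf.2 hx hy (by positivity) (by positivity) (weights hT)
    simp only [Prod.smul_mk, Prod.mk_add_mk, smul_eq_mul] at h ⊢
    rw [← combo ht hu] at h
    calc a * (t * f (x / t)) + b * (u * f (y / u))
        = (a * t + b * u) * (a * t / (a * t + b * u) * f (x / t) +
            b * u / (a * t + b * u) * f (y / u)) := by field_simp
      _ ≤ _ := mul_le_mul_of_nonneg_left h hT.le

theorem concaveOn_logb_two_one_add_mul {c : ℝ} (hc : 0 ≤ c) :
    ConcaveOn ℝ (Set.Ioi 0) (fun u : ℝ => Real.logb 2 (1 + u * c)) := by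
  refine ⟨convex_Ioi 0, fun u hu v hv a b ha hb hab => ?_⟩
  rw [Set.mem_Ioi] at hu hv
  have h := strictConcaveOn_log_Ioi.concaveOn.2
    (show 1 + u * c ∈ Set.Ioi (0 : ℝ) from by rw [Set.mem_Ioi]; positivity)
    (show 1 + v * c ∈ Set.Ioi (0 : ℝ) from by rw [Set.mem_Ioi]; positivity) ha hb hab
  simp only [smul_eq_mul, Real.logb] at h ⊢
  have hcombo : a * (1 + u * c) + b * (1 + v * c) = 1 + (a * u + b * v) * c := by
    linear_combination hab
  rw [hcombo] at h
  rw [mul_div_assoc', mul_div_assoc', ← add_div]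
  exact div_le_div_of_nonneg_right h (Real.log_nonneg one_le_two)

/-- The uplink rate function `r(p,B) = B * log₂(1 + p*g/(N₀*B))`
is jointly concave with respect to `(p,B)` on the open positive quadrant. -/
theorem rate_concaveOn (g N₀ : ℝ) (hg : 0 < g) (hN₀ : 0 < N₀) :
    ConcaveOn ℝ {x : ℝ × ℝ | 0 < x.1 ∧ 0 < x.2}
      (fun x : ℝ × ℝ => x.2 * Real.logb 2 (1 + x.1 * g / (N₀ * x.2))) := by
  have h := (concaveOn_logb_two_one_add_mul (div_pos hg hN₀).le).perspective
  have hset : {x : ℝ × ℝ | 0 < x.2 ∧ x.1 / x.2 ∈ Set.Ioi (0 : ℝ)} =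
      {x : ℝ × ℝ | 0 < x.1 ∧ 0 < x.2} := by
    ext x
    simp only [Set.mem_ofPred_eq, Set.mem_Ioi]
    exact ⟨fun ⟨ht, hx⟩ => ⟨(div_pos_iff_of_pos_right ht).1 hx, ht⟩,
      fun ⟨hx, ht⟩ => ⟨ht, div_pos hx ht⟩⟩
  rw [hset] at h
  simpa only [div_mul_div_comm, mul_comm N₀] using h
end

section
/- Fix constants g > 0, N₀ > 0 and c > 0. Define F(p,B) = c·p / r(p,B) on the open positive quadrant Q = {(p,B) : p > 0, B > 0}, where r(p,B) = B · log₂(1 + p·g/(N₀·B)). Then F is pseudoconvex on Q: F is differentiable at every point of Q, and for all (p,B), (p',B') ∈ Q, if the Fréchet derivative of F at (p,B) applied to the direction (p' − p, B' − B) is nonnegative, then F(p',B') ≥ F(p,B). (Lemma 1, second bullet, with c = ρₙ·dₙ.) -/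
open Set

/-- The derivative of `s ↦ s / log (1 + s)` is positive on the positive axis. -/
lemma exists_pos_hasDerivAt_div_log_one_add {s : ℝ} (hs : 0 < s) :
    ∃ d, 0 < d ∧ HasDerivAt (fun s : ℝ => s / Real.log (1 + s)) d s := by
  have h1 : 0 < 1 + s := by linarith
  have hlog : 0 < Real.log (1 + s) := Real.log_pos (by linarith)
  have hlt : s / (1 + s) < Real.log (1 + s) := by
    have h := Real.log_lt_sub_one_of_pos (inv_pos.2 h1) (inv_ne_one.2 (by linarith))
    rw [Real.log_inv] at h
    have : s / (1 + s) = 1 - (1 + s)⁻¹ := by field_simp; ring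
    linarith
  refine ⟨_, ?_, (hasDerivAt_id' s).div (((hasDerivAt_id' s).const_add 1).log h1.ne') hlog.ne'⟩
  refine div_pos ?_ (by positivity)
  rw [mul_one_div]
  linarith

lemma monotoneOn_div_log_one_add :
    MonotoneOn (fun s : ℝ => s / Real.log (1 + s)) (Ioi 0) := by
  have hd (s : ℝ) (hs : 0 < s) := exists_pos_hasDerivAt_div_log_one_add hs
  refine monotoneOn_of_deriv_nonneg (convex_Ioi 0) ?_ ?_ ?_
  · intro s hs
    obtain ⟨d, -, h⟩ := hd s hs
    exact h.continuousAt.continuousWithinAt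
  · rw [interior_Ioi]
    intro s hs
    obtain ⟨d, -, h⟩ := hd s hs
    exact h.differentiableAt.differentiableWithinAt
  · rw [interior_Ioi]
    intro s hs
    obtain ⟨d, hpos, h⟩ := hd s hs
    exact h.deriv ▸ hpos.le

/-- The energy ratio depends on `(p, B)` only through the signal-to-noise ratio `p g / (N₀ B)`. -/
lemma ratio_eq_mul_div_log_one_add {g N₀ : ℝ} (c : ℝ) (hg : g ≠ 0) (hN₀ : N₀ ≠ 0) (p B : ℝ) :
    c * p / (B * Real.logb 2 (1 + p * g / (N₀ * B))) =
      c * N₀ * Real.log 2 / g *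
        (g / N₀ * (p / B) / Real.log (1 + g / N₀ * (p / B))) := by
  have hs : p * g / (N₀ * B) = g / N₀ * (p / B) := by
    rw [div_mul_div_comm, mul_comm p g]
  have hcancel : N₀ / g * (g / N₀) = 1 := by field_simp
  rw [hs, Real.logb]
  simp only [div_eq_mul_inv, mul_inv, inv_inv] at hcancel ⊢
  linear_combination -(c * p * B⁻¹ * Real.log 2 *
    (Real.log (1 + g * N₀⁻¹ * (p * B⁻¹)))⁻¹) * hcancel

lemma hasFDerivAt_fst_div_snd {x : ℝ × ℝ} (hx : x.2 ≠ 0) :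
    HasFDerivAt (fun z : ℝ × ℝ => z.1 / z.2)
      ((x.2 ^ 2)⁻¹ • (x.2 • ContinuousLinearMap.fst ℝ ℝ ℝ -
        x.1 • ContinuousLinearMap.snd ℝ ℝ ℝ)) x := by
  have h := HasFDerivAt.fun_mul (hasFDerivAt_fst (𝕜 := ℝ) (p := x))
    ((hasDerivAt_inv hx).comp_hasFDerivAt x hasFDerivAt_snd)
  refine h.congr_fderiv ?_
  ext <;> simp <;> field_simp

/-- `F(p,B) = c·p / r(p,B)` is pseudoconvex on the open positive
quadrant `Q`: it is differentiable on `Q`, and whenever the Fréchet derivative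
of `F` at a point of `Q` in the direction of another point of `Q` is
nonnegative, the value at the second point is at least the value at the
first. -/
theorem ratio_pseudoconvexOn (g N₀ c : ℝ) (hg : 0 < g) (hN₀ : 0 < N₀) (hc : 0 < c)
    (Q : Set (ℝ × ℝ)) (hQ : Q = {x : ℝ × ℝ | 0 < x.1 ∧ 0 < x.2})
    (F : ℝ × ℝ → ℝ)
    (hF : F = fun x : ℝ × ℝ =>
      c * x.1 / (x.2 * Real.logb 2 (1 + x.1 * g / (N₀ * x.2)))) :
    (∀ x ∈ Q, DifferentiableAt ℝ F x) ∧
    (∀ x ∈ Q, ∀ y ∈ Q, 0 ≤ fderiv ℝ F x (y - x) → F x ≤ F y) := by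
  simp only [ratio_eq_mul_div_log_one_add c hg.ne' hN₀.ne'] at hF
  have hC : 0 < c * N₀ * Real.log 2 / g := by
    have := Real.log_pos one_lt_two
    positivity
  have ha : 0 < g / N₀ := div_pos hg hN₀
  generalize c * N₀ * Real.log 2 / g = C at hF hC
  generalize g / N₀ = a at hF ha
  subst hQ hF
  have hderiv (x : ℝ × ℝ) (hx : 0 < x.1 ∧ 0 < x.2) :
      ∃ k : ℝ, 0 < k ∧ HasFDerivAt
        (fun z : ℝ × ℝ => C * (a * (z.1 / z.2) / Real.log (1 + a * (z.1 / z.2))))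
        (k • (x.2 • ContinuousLinearMap.fst ℝ ℝ ℝ -
          x.1 • ContinuousLinearMap.snd ℝ ℝ ℝ)) x := by
    obtain ⟨hx1, hx2⟩ := hx
    obtain ⟨d, hd, h⟩ := exists_pos_hasDerivAt_div_log_one_add
      (mul_pos ha (div_pos hx1 hx2))
    refine ⟨C * (d * (a * (x.2 ^ 2)⁻¹)), by positivity, ?_⟩
    have := (h.comp_hasFDerivAt x ((hasFDerivAt_fst_div_snd hx2.ne').const_mul a)).const_mul C
    simp only [smul_smul] at this
    exact this
  refine ⟨fun x hx => ?_, fun x hx y hy hxy => ?_⟩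
  · obtain ⟨k, -, h⟩ := hderiv x hx
    exact h.differentiableAt
  · obtain ⟨k, hk, h⟩ := hderiv x hx
    rw [h.fderiv] at hxy
    have hcross : 0 ≤ x.2 * (y.1 - x.1) - x.1 * (y.2 - x.2) :=
      nonneg_of_mul_nonneg_right (by simpa using hxy) hk
    have hle : x.1 / x.2 ≤ y.1 / y.2 := by
      rw [div_le_div_iff₀ hx.2 hy.2]
      linarith
    exact mul_le_mul_of_nonneg_left
      (monotoneOn_div_log_one_add (mul_pos ha (div_pos hx.1 hx.2))
        (mul_pos ha (div_pos hy.1 hy.2)) (mul_le_mul_of_nonneg_left hle ha.le)) hC.le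
end

section
/- Let E be a real normed vector space, C ⊆ E an open convex set, and u, v : E → ℝ functions that are differentiable at every point of C. Assume u is convex on C with u(x) ≥ 0 for all x ∈ C, and v is concave on C with v(x) > 0 for all x ∈ C. Then the ratio u/v is pseudoconvex on C: for all x, y ∈ C, if the Fréchet derivative of the function z ↦ u(z)/v(z) at x applied to y − x is nonnegative, then u(y)/v(y) ≥ u(x)/v(x). -/
/-- The gradient inequality for convex functions: the graph lies above its tangents. -/
theorem ConvexOn.fderiv_apply_sub_le {E : Type*} [NormedAddCommGroup E] [NormedSpace ℝ E]
    {C : Set E} {f : E → ℝ} (hf : ConvexOn ℝ C f) {x y : E} (hx : x ∈ C) (hy : y ∈ C)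
    (hfx : DifferentiableAt ℝ f x) : fderiv ℝ f x (y - x) ≤ f y - f x := by
  have hderiv : HasDerivAt (f ∘ AffineMap.lineMap x y) (fderiv ℝ f x (y - x)) (0 : ℝ) := by
    refine HasFDerivAt.comp_hasDerivAt (0 : ℝ) ?_ AffineMap.hasDerivAt_lineMap
    simpa using hfx.hasFDerivAt
  simpa [slope_def_field] using (hf.comp_affineMap (AffineMap.lineMap x y)).le_slope_of_hasDerivAt
    (by simpa using hx) (by simpa using hy) zero_lt_one hderiv

/-- The gradient inequality for concave functions: the graph lies below its tangents. -/
theorem ConcaveOn.sub_le_fderiv_apply_sub {E : Type*} [NormedAddCommGroup E] [NormedSpace ℝ E]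
    {C : Set E} {f : E → ℝ} (hf : ConcaveOn ℝ C f) {x y : E} (hx : x ∈ C) (hy : y ∈ C)
    (hfx : DifferentiableAt ℝ f x) : f y - f x ≤ fderiv ℝ f x (y - x) := by
  have h := hf.neg.fderiv_apply_sub_le hx hy hfx.neg
  rw [fderiv_neg] at h
  simp only [neg_apply, Pi.neg_apply] at h
  linarith

/-- The quotient rule with the denominator cleared. -/
theorem mul_fderiv_div_apply {E : Type*} [NormedAddCommGroup E] [NormedSpace ℝ E]
    {u v : E → ℝ} {x : E} (hu : DifferentiableAt ℝ u x) (hv : DifferentiableAt ℝ v x)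
    (hvx : v x ≠ 0) (d : E) :
    v x * fderiv ℝ (fun z => u z / v z) x d = fderiv ℝ u x d - u x / v x * fderiv ℝ v x d := by
  have hmul : u =ᶠ[nhds x] fun z => u z / v z * v z := by
    filter_upwards [hv.continuousAt.eventually_ne hvx] with z hz
    exact (div_mul_cancel₀ _ hz).symm
  have hdiv : DifferentiableAt ℝ (fun z => u z / v z) x := by
    simpa only [div_eq_mul_inv] using hu.fun_mul (hv.fun_inv hvx)
  rw [hmul.fderiv_eq, fderiv_fun_mul hdiv hv]
  simp

/-- a ratio of a nonnegative convex differentiable numerator and a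
positive concave differentiable denominator is pseudoconvex on an open convex
set. -/
theorem ratio_convex_over_concave_pseudoconvex
    {E : Type*} [NormedAddCommGroup E] [NormedSpace ℝ E]
    (C : Set E) (hCopen : IsOpen C) (hCconv : Convex ℝ C)
    (u v : E → ℝ)
    (hu_diff : ∀ x ∈ C, DifferentiableAt ℝ u x)
    (hv_diff : ∀ x ∈ C, DifferentiableAt ℝ v x)
    (hu_conv : ConvexOn ℝ C u) (hu_nonneg : ∀ x ∈ C, 0 ≤ u x)
    (hv_conc : ConcaveOn ℝ C v) (hv_pos : ∀ x ∈ C, 0 < v x) :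
    ∀ x ∈ C, ∀ y ∈ C,
      0 ≤ fderiv ℝ (fun z => u z / v z) x (y - x) → u x / v x ≤ u y / v y := by
  intro x hx y hy h
  have hu := hu_conv.fderiv_apply_sub_le hx hy (hu_diff x hx)
  have hv := mul_le_mul_of_nonneg_left
    (hv_conc.sub_le_fderiv_apply_sub hx hy (hv_diff x hx))
    (div_nonneg (hu_nonneg x hx) (hv_pos x hx).le)
  have hquot := mul_fderiv_div_apply (hu_diff x hx) (hv_diff x hx) (hv_pos x hx).ne' (y - x)
  have hnonneg := mul_nonneg (hv_pos x hx).le h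
  have hcancel := div_mul_cancel₀ (u x) (hv_pos x hx).ne'
  rw [le_div_iff₀ (hv_pos y hy)]
  linarith
end

section
/- Let E be a real normed vector space, S ⊆ E a convex set, ι a finite index set, and ω > 0. For each i ∈ ι, let uᵢ, vᵢ : E → ℝ be differentiable at a point x* ∈ S, with uᵢ convex on S and uᵢ(x) ≥ 0 for all x ∈ S, and vᵢ concave on S and vᵢ(x) > 0 for all x ∈ S. Suppose x* is a global minimizer over S of the sum of ratios H(x) = Σᵢ uᵢ(x)/vᵢ(x). Define γᵢ* = ω/vᵢ(x*) and δᵢ* = uᵢ(x*)/vᵢ(x*). Then x* is a global minimizer over S of the parametric objective G(x) = Σᵢ γᵢ* · (uᵢ(x) − δᵢ* · vᵢ(x)), and G(x*) = 0; in particular Σᵢ γᵢ* · (uᵢ(x) − δᵢ* · vᵢ(x)) ≥ 0 for every x ∈ S. (Theorem 1: the sum-of-ratios problem P₆ and the parametric problem P₇ with γ = γ*, δ = δ* share the optimal solution, and γₙ* = ω₂/rₙ(pₙ*,Bₙ*), δₙ* = pₙ*ρₙdₙDₙ/rₙ(pₙ*,Bₙ*).) -/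
open Filter Topology in
/-- First-order optimality for a sum of convex/concave ratios: at a minimizer `a`, the linearized
objective is nonnegative. The derivative is replaced by the limit `t → 0⁺` of the chord bounds for
`u i` and `v i` along the segment from `a` to `x`, so no differentiability is needed. -/
theorem sum_ratio_linearization_nonneg {E ι : Type*} [AddCommGroup E] [Module ℝ E] [Fintype ι]
    {S : Set E} (hS : Convex ℝ S) {u v : ι → E → ℝ} {a x : E} (ha : a ∈ S) (hx : x ∈ S)
    (hu : ∀ i, ConvexOn ℝ S (u i)) (hu_nonneg : ∀ i, ∀ y ∈ S, 0 ≤ u i y)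
    (hv : ∀ i, ConcaveOn ℝ S (v i)) (hv_pos : ∀ i, ∀ y ∈ S, 0 < v i y)
    (hmin : ∀ y ∈ S, ∑ i, u i a / v i a ≤ ∑ i, u i y / v i y) :
    0 ≤ ∑ i, (u i x - u i a / v i a * v i x) / v i a := by
  have chord_nonneg : ∀ t ∈ Set.Ioo (0 : ℝ) 1,
      0 ≤ ∑ i, (u i x - u i a / v i a * v i x) / ((1 - t) * v i a + t * v i x) := by
    rintro t ⟨ht0, ht1⟩
    have h1t : 0 < 1 - t := sub_pos.2 ht1
    have hy : (1 - t) • a + t • x ∈ S := hS ha hx h1t.le ht0.le (by ring)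
    have hbound : ∀ i, u i ((1 - t) • a + t • x) / v i ((1 - t) • a + t • x) ≤
        u i a / v i a +
          t * ((u i x - u i a / v i a * v i x) / ((1 - t) * v i a + t * v i x)) := by
      intro i
      have hva := hv_pos i a ha
      have hvx := hv_pos i x hx
      have hden : 0 < (1 - t) * v i a + t * v i x := by positivity
      have hu_le := (hu i).2 ha hx h1t.le ht0.le (by ring)
      have hv_le := (hv i).2 ha hx h1t.le ht0.le (by ring)
      simp only [smul_eq_mul] at hu_le hv_le
      calc
        _ ≤ ((1 - t) * u i a + t * u i x) / ((1 - t) * v i a + t * v i x) :=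
          div_le_div₀ ((hu_nonneg i _ hy).trans hu_le) hu_le hden hv_le
        _ = _ := by
          have := hden.ne'
          field_simp
          ring
    have hsum := (hmin _ hy).trans (Finset.sum_le_sum fun i _ => hbound i)
    rw [Finset.sum_add_distrib, ← Finset.mul_sum] at hsum
    exact nonneg_of_mul_nonneg_right (le_add_iff_nonneg_right _ |>.1 hsum) ht0
  have hlim : Tendsto
      (fun t : ℝ => ∑ i, (u i x - u i a / v i a * v i x) / ((1 - t) * v i a + t * v i x))
      (𝓝[>] 0) (𝓝 (∑ i, (u i x - u i a / v i a * v i x) / v i a)) := by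
    refine tendsto_finsetSum _ fun i _ => Tendsto.div tendsto_const_nhds ?_ (hv_pos i a ha).ne'
    have hcont : Continuous fun t : ℝ => (1 - t) * v i a + t * v i x := by fun_prop
    simpa using (hcont.tendsto 0).mono_left nhdsWithin_le_nhds
  exact ge_of_tendsto hlim
    (mem_of_superset (Ioo_mem_nhdsGT one_pos) chord_nonneg)

/-- equivalence between the sum-of-ratios problem and the
parametric problem at the optimal parameters (Theorem 1). -/
theorem sum_of_ratios_parametric_equivalence
    {E : Type*} [NormedAddCommGroup E] [NormedSpace ℝ E]
    {ι : Type*} [Fintype ι]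
    (S : Set E) (hS : Convex ℝ S) (ω : ℝ) (hω : 0 < ω)
    (u v : ι → E → ℝ) (xstar : E) (hxstar : xstar ∈ S)
    (hu_diff : ∀ i, DifferentiableAt ℝ (u i) xstar)
    (hv_diff : ∀ i, DifferentiableAt ℝ (v i) xstar)
    (hu_conv : ∀ i, ConvexOn ℝ S (u i))
    (hu_nonneg : ∀ i, ∀ x ∈ S, 0 ≤ u i x)
    (hv_conc : ∀ i, ConcaveOn ℝ S (v i))
    (hv_pos : ∀ i, ∀ x ∈ S, 0 < v i x)
    (hmin : ∀ x ∈ S, ∑ i, u i xstar / v i xstar ≤ ∑ i, u i x / v i x)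
    (γ δ : ι → ℝ)
    (hγ : ∀ i, γ i = ω / v i xstar) (hδ : ∀ i, δ i = u i xstar / v i xstar) :
    (∀ x ∈ S, ∑ i, γ i * (u i xstar - δ i * v i xstar) ≤
        ∑ i, γ i * (u i x - δ i * v i x)) ∧
    (∑ i, γ i * (u i xstar - δ i * v i xstar) = 0) ∧
    (∀ x ∈ S, 0 ≤ ∑ i, γ i * (u i x - δ i * v i x)) := by
  have hzero : ∑ i, γ i * (u i xstar - δ i * v i xstar) = 0 :=
    Finset.sum_eq_zero fun i _ => by
      rw [hδ, div_mul_cancel₀ _ (hv_pos i xstar hxstar).ne', sub_self, mul_zero]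
  have hnonneg : ∀ x ∈ S, 0 ≤ ∑ i, γ i * (u i x - δ i * v i x) := by
    intro x hx
    have hlin := sum_ratio_linearization_nonneg hS hxstar hx hu_conv hu_nonneg hv_conc hv_pos hmin
    calc
      0 ≤ ω * ∑ i, (u i x - u i xstar / v i xstar * v i x) / v i xstar :=
        mul_nonneg hω.le hlin
      _ = ∑ i, γ i * (u i x - δ i * v i x) := by
        rw [Finset.mul_sum]
        refine Finset.sum_congr rfl fun i _ => ?_
        rw [hγ, hδ]
        ring
  exact ⟨fun x hx => hzero.trans_le (hnonneg x hx), hzero, hnonneg⟩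
end
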